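/- Let S and X be measurable spaces, κ a Markov kernel from S to X (a measurable family s ↦ κ_s of probability measures on X), and γ ∈ [0,1] such that |κ_s(A) − κ_{s'}(A)| ≤ γ for all s, s' ∈ S and all measurable A ⊆ X. Let μ, ν be probability measures on S and δ ≥ 0 be such that |μ(B) − ν(B)| ≤ δ for every measurable B ⊆ S. Then for every measurable A ⊆ X, |∫ κ_s(A) dμ(s) − ∫ κ_s(A) dν(s)| ≤ γ·δ. -/

import Mathlib

open MeasureTheory ProbabilityTheory

/-! The superlevel sets of a function `0 ≤ f ≤ c` are measurable, so two measures agreeing on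
measurable sets up to `δ` agree on each of them up to `δ`; integrating over the levels `t ∈ [0, c]`
(layer-cake formula) bounds the difference of the integrals of `f` by `c * δ`. For measures of equal
mass the integrals may be compared after subtracting a constant from `f`, so only the oscillation of
`f` counts, and the oscillation of `s ↦ κ s A` is at most `γ`. -/

section

open Set

theorem exists_forall_mem_Icc_of_abs_sub_le {ι : Type*} {f : ι → ℝ} {c : ℝ}
    (h : ∀ i j, |f i - f j| ≤ c) : ∃ a, ∀ i, f i ∈ Icc a (a + c) := by
  refine ⟨⨅ i, f i, fun i => ?_⟩
  have : Nonempty ι := ⟨i⟩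
  have hlower (j : ι) : f i - c ≤ f j := sub_le_comm.1 (le_of_abs_le (h i j))
  exact ⟨ciInf_le ⟨f i - c, forall_mem_range.2 hlower⟩ i, sub_le_iff_le_add.1 (le_ciInf hlower)⟩

theorem antitone_measureReal_superlevel {S : Type*} [MeasurableSpace S] (μ : Measure S)
    [IsFiniteMeasure μ] (f : S → ℝ) :
    Antitone fun t => μ.real {s | t ≤ f s} :=
  fun _ _ htu => measureReal_mono fun _ hs => htu.trans hs

variable {S : Type*} [MeasurableSpace S] {μ ν : Measure S} [IsFiniteMeasure μ] [IsFiniteMeasure ν]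
  {f : S → ℝ} {a b c δ : ℝ}

theorem integral_eq_intervalIntegral_measureReal_superlevel (hf : AEMeasurable f μ)
    (hc : 0 ≤ c) (hfc : ∀ᵐ s ∂μ, f s ∈ Icc 0 c) :
    ∫ s, f s ∂μ = ∫ t in 0..c, μ.real {s | t ≤ f s} := by
  have hint : Integrable f μ := .of_mem_Icc 0 c hf hfc
  rw [intervalIntegral.integral_of_le hc]
  exact hint.integral_eq_integral_Ioc_meas_le (hfc.mono fun _ h => h.1) (hfc.mono fun _ h => h.2)

theorem abs_integral_sub_integral_le_of_mem_Icc_zero (hf : Measurable f) (hc : 0 ≤ c)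
    (hfc : ∀ s, f s ∈ Icc 0 c) (hμν : ∀ B, MeasurableSet B → |μ.real B - ν.real B| ≤ δ) :
    |∫ s, f s ∂μ - ∫ s, f s ∂ν| ≤ c * δ :=
  calc |∫ s, f s ∂μ - ∫ s, f s ∂ν|
      = |∫ t in 0..c, (μ.real {s | t ≤ f s} - ν.real {s | t ≤ f s})| := by
        rw [integral_eq_intervalIntegral_measureReal_superlevel hf.aemeasurable hc (.of_forall hfc),
          integral_eq_intervalIntegral_measureReal_superlevel hf.aemeasurable hc (.of_forall hfc),
          intervalIntegral.integral_sub
            (antitone_measureReal_superlevel μ f).intervalIntegrable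
            (antitone_measureReal_superlevel ν f).intervalIntegrable]
    _ ≤ δ * |c - 0| := by
        rw [← Real.norm_eq_abs]
        exact intervalIntegral.norm_integral_le_of_norm_le_const fun t _ =>
          hμν _ (measurableSet_le measurable_const hf)
    _ = c * δ := by rw [sub_zero, abs_of_nonneg hc, mul_comm]

theorem abs_integral_sub_integral_le_of_mem_Icc (hf : Measurable f) (hab : a ≤ b)
    (hfab : ∀ s, f s ∈ Icc a b) (hmass : μ univ = ν univ)
    (hμν : ∀ B, MeasurableSet B → |μ.real B - ν.real B| ≤ δ) :
    |∫ s, f s ∂μ - ∫ s, f s ∂ν| ≤ (b - a) * δ := by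
  have integral_sub_left (ρ : Measure S) [IsFiniteMeasure ρ] :
      ∫ s, (f s - a) ∂ρ = ∫ s, f s ∂ρ - ρ.real univ * a := by
    rw [integral_sub (.of_mem_Icc a b hf.aemeasurable (.of_forall hfab)) (integrable_const a),
      integral_const, smul_eq_mul]
  have hshift : ∫ s, f s ∂μ - ∫ s, f s ∂ν = ∫ s, (f s - a) ∂μ - ∫ s, (f s - a) ∂ν := by
    rw [integral_sub_left, integral_sub_left, measureReal_def, measureReal_def, hmass,
      sub_sub_sub_cancel_right]
  rw [hshift]
  exact abs_integral_sub_integral_le_of_mem_Icc_zero (hf.sub_const a) (sub_nonneg.2 hab)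
    (fun s => ⟨sub_nonneg.2 (hfab s).1, sub_le_sub_right (hfab s).2 a⟩) hμν

theorem abs_integral_sub_integral_le_of_abs_sub_le (hf : Measurable f) (hc : 0 ≤ c)
    (hosc : ∀ s s', |f s - f s'| ≤ c) (hmass : μ univ = ν univ)
    (hμν : ∀ B, MeasurableSet B → |μ.real B - ν.real B| ≤ δ) :
    |∫ s, f s ∂μ - ∫ s, f s ∂ν| ≤ c * δ := by
  obtain ⟨a, ha⟩ := exists_forall_mem_Icc_of_abs_sub_le hosc
  simpa only [add_sub_cancel_left] using
    abs_integral_sub_integral_le_of_mem_Icc hf (le_add_of_nonneg_right hc) ha hmass hμν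

end

theorem kernel_integral_tv_contraction_general
    {S X : Type*} [MeasurableSpace S] [MeasurableSpace X]
    (κ : Kernel S X) [IsFiniteKernel κ] (γ : ℝ) (hγ : 0 ≤ γ)
    (hκ : ∀ s s' : S, ∀ A : Set X, MeasurableSet A → |(κ s A).toReal - (κ s' A).toReal| ≤ γ)
    (μ ν : Measure S) [IsFiniteMeasure μ] [IsFiniteMeasure ν] (hmass : μ .univ = ν .univ)
    (δ : ℝ) (hμν : ∀ B : Set S, MeasurableSet B → |(μ B).toReal - (ν B).toReal| ≤ δ) :
    ∀ A : Set X, MeasurableSet A →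
      |(∫ s, (κ s A).toReal ∂μ) - ∫ s, (κ s A).toReal ∂ν| ≤ γ * δ :=
  fun A hA => abs_integral_sub_integral_le_of_abs_sub_le (κ.measurable_coe hA).ennreal_toReal hγ
    (fun s s' => hκ s s' A hA) hmass hμν

theorem kernel_integral_tv_contraction
    {S X : Type*} [MeasurableSpace S] [MeasurableSpace X]
    (κ : Kernel S X) [IsMarkovKernel κ]
    (γ : ℝ) (hγ0 : 0 ≤ γ) (hγ1 : γ ≤ 1)
    (hκ : ∀ s s' : S, ∀ A : Set X, MeasurableSet A →
      |(κ s A).toReal - (κ s' A).toReal| ≤ γ)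
    (μ ν : Measure S) [IsProbabilityMeasure μ] [IsProbabilityMeasure ν]
    (δ : ℝ) (hδ : 0 ≤ δ)
    (hμν : ∀ B : Set S, MeasurableSet B → |(μ B).toReal - (ν B).toReal| ≤ δ) :
    ∀ A : Set X, MeasurableSet A →
      |(∫ s, (κ s A).toReal ∂μ) - ∫ s, (κ s A).toReal ∂ν| ≤ γ * δ :=
  kernel_integral_tv_contraction_general κ γ hγ0 hκ μ ν (measure_univ.trans measure_univ.symm) δ hμν
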